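/- Let R be a Cohen-Macaulay commutative noetherian local ring. Then every prime ideal p of R such that R_p is not a regular local ring contains the ideal ⋂ Ann_R Ext_R^i(K,L), where the intersection ranges over all integers i > 0 and all modules K, L in CM_0(R). Equivalently, the singular locus Sing R is contained in V(⋂_{i>0, K,L ∈ CM_0(R)} Ann_R Ext_R^i(K,L)). -/

import Mathlib

open CategoryTheory IsLocalRing

noncomputable section

/-- The `i`-th Tor module of two `R`-modules, as an object of `ModuleCat R`. -/
def TorMod (R : Type) [CommRing R] (i : ℕ) (M N : ModuleCat.{0} R) : ModuleCat.{0} R :=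
  ((Tor (ModuleCat.{0} R) i).obj M).obj N

/-- The `i`-th Ext module of two `R`-modules, as an object of `ModuleCat R`. -/
def ExtMod (R : Type) [CommRing R] (i : ℕ) (M N : ModuleCat.{0} R) : ModuleCat.{0} R :=
  ((Ext R (ModuleCat.{0} R) i).obj (Opposite.op M)).obj N

/-- Integer-indexed Tor: `Tor_n = 0` for `n < 0`. -/
def TorZ (R : Type) [CommRing R] (n : ℤ) (M N : ModuleCat.{0} R) : ModuleCat.{0} R :=
  if 0 ≤ n then TorMod R n.toNat M N else ModuleCat.of R PUnit

/-- Integer-indexed Ext: `Ext^n = 0` for `n < 0`. -/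
def ExtZ (R : Type) [CommRing R] (n : ℤ) (M N : ModuleCat.{0} R) : ModuleCat.{0} R :=
  if 0 ≤ n then ExtMod R n.toNat M N else ModuleCat.of R PUnit

/-- The depth of a module `N` over a local ring `S`, defined as the infimum of the set of
integers `i` such that `Ext^i(k, N) ≠ 0`, where `k` is the residue field of `S`
(`⊤` if no such `i` exists). -/
def moduleDepth (S : Type) [CommRing S] [IsLocalRing S] (N : Type) [AddCommGroup N]
    [Module S N] : ℕ∞ :=
  sInf {i : ℕ∞ | ∃ j : ℕ, i = (j : ℕ∞) ∧
    Nontrivial (ExtMod S j (ModuleCat.of S (ResidueField S)) (ModuleCat.of S N))}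

/-- A local ring is regular if it is noetherian and its maximal ideal can be generated by
(Krull dimension of `S`)-many elements. -/
def IsRegularLocal (S : Type) [CommRing S] [IsLocalRing S] : Prop :=
  IsNoetherianRing S ∧ ∃ s : Finset S, Ideal.span (s : Set S) = maximalIdeal S ∧
    (s.card : WithBot ℕ∞) = ringKrullDim S

/-- A local ring is Cohen-Macaulay if its depth (as a module over itself) equals its
Krull dimension. -/
def IsCMLocalRing (R : Type) [CommRing R] [IsLocalRing R] : Prop :=
  (moduleDepth R R : WithBot ℕ∞) = ringKrullDim R

/-- A module `M` over a local ring `R` is maximal Cohen-Macaulay if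
`depth M_p ≥ dim R_p` for every prime ideal `p` of `R`. -/
def IsMCMModule (R : Type) [CommRing R] [IsLocalRing R] (M : Type) [AddCommGroup M]
    [Module R M] : Prop :=
  ∀ (p : Ideal R) [p.IsPrime],
    ringKrullDim (Localization.AtPrime p) ≤
      (moduleDepth (Localization.AtPrime p) (LocalizedModule p.primeCompl M) : WithBot ℕ∞)

/-- Membership in `CM(R)`: finitely generated maximal Cohen-Macaulay modules. -/
def MemCM (R : Type) [CommRing R] [IsLocalRing R] (M : ModuleCat.{0} R) : Prop :=
  Module.Finite R M ∧ IsMCMModule R M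

/-- Membership in `CM₀(R)`: finitely generated maximal Cohen-Macaulay modules that are
locally free on the punctured spectrum. -/
def MemCM0 (R : Type) [CommRing R] [IsLocalRing R] (M : ModuleCat.{0} R) : Prop :=
  Module.Finite R M ∧ IsMCMModule R M ∧
    ∀ (p : Ideal R) [p.IsPrime], p ≠ maximalIdeal R →
      Module.Free (Localization.AtPrime p) (LocalizedModule p.primeCompl M)

/-- The singular locus of `R`: primes `p` such that `R_p` is not regular. -/
def singularLocus (R : Type) [CommRing R] : Set (PrimeSpectrum R) :=
  {p | ¬ IsRegularLocal (Localization.AtPrime p.asIdeal)}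

/-- The nonfree locus of a module `M`: primes `p` such that `M_p` is not a free
`R_p`-module. -/
def nonfreeLocus (R : Type) [CommRing R] (M : Type) [AddCommGroup M] [Module R M] :
    Set (PrimeSpectrum R) :=
  {p | ¬ Module.Free (Localization.AtPrime p.asIdeal)
        (LocalizedModule p.asIdeal.primeCompl M)}

/-- `K` is a first syzygy of `N` in a minimal free resolution: there is a surjection
`f : R^n → N` with `ker f ⊆ m·R^n` and `K ≅ ker f`. -/
def IsMinimalSyzygy1 (R : Type) [CommRing R] [IsLocalRing R] (N K : ModuleCat.{0} R) : Prop :=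
  ∃ (n : ℕ) (f : (Fin n → R) →ₗ[R] N), Function.Surjective f ∧
    LinearMap.ker f ≤ (maximalIdeal R) • (⊤ : Submodule R (Fin n → R)) ∧
    Nonempty (K ≃ₗ[R] LinearMap.ker f)

/-- `K` is a `d`-th syzygy of `N` in a minimal free resolution. -/
def IsMinimalSyzygy (R : Type) [CommRing R] [IsLocalRing R] :
    ℕ → ModuleCat.{0} R → ModuleCat.{0} R → Prop
  | 0, N, K => Nonempty ((K : Type) ≃ₗ[R] N)
  | d + 1, N, K => ∃ L : ModuleCat.{0} R, IsMinimalSyzygy1 R N L ∧ IsMinimalSyzygy R d L K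

/-- A module is indecomposable if it is nonzero and is not isomorphic to the direct sum of
two nonzero modules. -/
def IndecomposableModule (R : Type) [CommRing R] (M : Type) [AddCommGroup M] [Module R M] :
    Prop :=
  Nontrivial M ∧ ∀ (A B : Type) [AddCommGroup A] [Module R A] [AddCommGroup B] [Module R B],
    Nonempty (M ≃ₗ[R] A × B) → (Subsingleton A ∨ Subsingleton B)


theorem kill_iso {S : Type} [CommRing S] {X Y : ModuleCat.{0} S} (e : X ≅ Y) (a : S) :
    (∀ x : X, a • x = 0) ↔ ∀ x : Y, a • x = 0 := by
  let e' := e.toLinearEquiv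
  constructor
  · intro h x
    apply e'.symm.injective
    rw [map_smul, h, map_zero]
  · intro h x
    apply e'.injective
    rw [map_smul, h, map_zero]

theorem kill_homology {S : Type} [CommRing S] (T : ShortComplex (ModuleCat.{0} S)) (a : S) :
    (∀ x : T.homology, a • x = 0) ↔
      ∀ x : T.X₂, T.g x = 0 → ∃ y : T.X₁, T.f y = a • x := by
  rw [kill_iso T.moduleCatHomologyIso]
  change (∀ x : (LinearMap.ker T.g.hom ⧸ LinearMap.range T.moduleCatToCycles), a • x = 0) ↔ _
  constructor
  · intro h x hx
    have := h (Submodule.Quotient.mk ⟨x, hx⟩)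
    rw [← Submodule.Quotient.mk_smul, Submodule.Quotient.mk_eq_zero] at this
    obtain ⟨y, hy⟩ := this
    exact ⟨y, congrArg Subtype.val hy⟩
  · intro h x
    obtain ⟨⟨x, hx⟩, rfl⟩ := Submodule.Quotient.mk_surjective _ x
    rw [← Submodule.Quotient.mk_smul, Submodule.Quotient.mk_eq_zero]
    obtain ⟨y, hy⟩ := h x hx
    exact ⟨y, Subtype.ext hy⟩

theorem extMod_kill_iff (S : Type) [CommRing S] (M N : ModuleCat.{0} S)
    (P : ProjectiveResolution M) (n : ℕ) (a : S) :
    (∀ x : ExtMod S n M N, a • x = 0) ↔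
      ∀ f : P.complex.X n ⟶ N, P.complex.d (n+1) n ≫ f = 0 →
        ∃ g : (P.complex.X ((ComplexShape.up ℕ).prev n)) ⟶ N,
          P.complex.d n ((ComplexShape.up ℕ).prev n) ≫ g = a • f := by
  let C := P.complex.linearYonedaObj S N
  rw [kill_iso (show ExtMod S n M N ≅ C.homology n from P.isoExt n N)]
  refine (kill_homology (C.sc n) a).trans ?_
  change (∀ x : P.complex.X n ⟶ N, P.complex.d ((ComplexShape.up ℕ).next n) n ≫ x = 0 → 
    ∃ y : (P.complex.X ((ComplexShape.up ℕ).prev n)) ⟶ N,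
          P.complex.d n ((ComplexShape.up ℕ).prev n) ≫ y = a • x) ↔ _
  rw [show (ComplexShape.up ℕ).next n = n + 1 by simp]

open Abelian in
theorem ext_kill_iff (S : Type) [CommRing S] (M N : ModuleCat.{0} S)
    (P : ProjectiveResolution M) (n : ℕ) (a : S) :
    (∀ x : Abelian.Ext M N (n+1), a • x = 0) ↔
      ∀ f : P.complex.X (n+1) ⟶ N, P.complex.d (n+2) (n+1) ≫ f = 0 →
        ∃ g : (P.complex.X n) ⟶ N, P.complex.d (n+1) n ≫ g = a • f := by
  have key : ∀ (f : P.complex.X (n+1) ⟶ N) (hf : P.complex.d (n+2) (n+1) ≫ f = 0), 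
      a • P.extMk f (n+2) rfl hf = 0 ↔ ∃ g : (P.complex.X n) ⟶ N, P.complex.d (n+1) n ≫ g = a • f := by
    intro f hf
    have h1 : a • P.extMk f (n+2) rfl hf = P.extMk (a • f) (n+2) rfl (by simp [hf]) := by
      have := P.extMk_comp_mk₀ f (n+2) rfl hf (a • 𝟙 N)
      simpa [Ext.mk₀_smul] using this
    rw [h1, P.extMk_eq_zero_iff _ _ _ _ n rfl]
  constructor
  · intro h f hf
    exact (key f hf).1 (h _)
  · intro h x
    obtain ⟨f, hf, rfl⟩ := P.extMk_surjective x (n+2) rfl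
    exact (key f hf).2 (h f hf)

theorem extMod_succ_kill_iff (S : Type) [CommRing S] (M N : ModuleCat.{0} S) (n : ℕ) (a : S) :
    (∀ x : ExtMod S (n+1) M N, a • x = 0) ↔ (∀ x : Abelian.Ext M N (n+1), a • x = 0) := by
  let P := projectiveResolution M
  rw [extMod_kill_iff S M N P, ext_kill_iff S M N P]
  rw [show (ComplexShape.up ℕ).prev (n+1) = n by simp]

theorem subsingleton_iff_kill {S : Type} [CommRing S] {M : Type} [AddCommGroup M] [Module S M] :
    Subsingleton M ↔ ∀ x : M, (1 : S) • x = 0 := by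
  simp only [one_smul]
  exact subsingleton_iff_forall_eq 0

theorem extMod_subsingleton_iff (S : Type) [CommRing S] (M N : ModuleCat.{0} S) (n : ℕ) :
    Subsingleton (ExtMod S n M N) ↔ Subsingleton (Abelian.Ext M N n) := by
  rw [subsingleton_iff_kill (S := S) (M := ExtMod S n M N),
    subsingleton_iff_kill (S := S) (M := Abelian.Ext M N n)]
  cases n with
  | succ n => exact extMod_succ_kill_iff S M N n 1
  | zero =>
    rw [← subsingleton_iff_kill (S := S) (M := Abelian.Ext M N 0),
      Abelian.Ext.homEquiv₀.subsingleton_congr]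
    let P := projectiveResolution M
    rw [extMod_kill_iff S M N P]
    rw [show (ComplexShape.up ℕ).prev 0 = 0 by simp]
    have hd : P.complex.d 0 0 = 0 := P.complex.shape _ _ (by simp)
    simp only [hd, Limits.zero_comp, one_smul]
    constructor
    · intro h
      suffices hs : ∀ f : ((ChainComplex.single₀ _).obj M).X 0 ⟶ N, f = 0 from
        subsingleton_of_forall_eq 0 fun f => hs f
      intro f
      obtain ⟨_, h2⟩ := h (P.π.f 0 ≫ f) (by
        rw [← Category.assoc, P.complex_d_comp_π_f_zero, Limits.zero_comp])
      have : Epi (P.π.f 0) := inferInstance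
      rw [← cancel_epi (P.π.f 0), ← h2, Limits.comp_zero]
    · intro h f hf
      refine ⟨0, ?_⟩
      obtain ⟨l, hl⟩ : ∃ l : ((ChainComplex.single₀ _).obj M).X 0 ⟶ N, P.π.f 0 ≫ l = f := 
        ⟨P.exact₀.desc f hf, P.exact₀.g_desc f hf⟩
      rw [← hl, show l = 0 from h.elim (α := M ⟶ N) l 0, Limits.comp_zero]

theorem le_moduleDepth_iff (S : Type) [CommRing S] [IsLocalRing S] (N : Type) [AddCommGroup N]
    [Module S N] (n : ℕ) : (n : ℕ∞) ≤ moduleDepth S N ↔ ∀ j < n, Subsingleton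
      (Abelian.Ext (ModuleCat.of S (ResidueField S)) (ModuleCat.of S N) j) := by
  simp only [← extMod_subsingleton_iff]
  unfold moduleDepth
  rw [le_sInf_iff]
  constructor
  · intro h j hj
    by_contra hc
    rw [not_subsingleton_iff_nontrivial] at hc
    have := h j ⟨j, rfl, hc⟩
    have : n ≤ j := by exact_mod_cast this
    omega
  · rintro h _ ⟨j, rfl, hj⟩
    by_contra hc
    have : j < n := by exact_mod_cast not_le.1 hc
    have := h j this
    exact not_subsingleton _ this


lemma ext_subsingleton_of_iso {S : Type} [CommRing S] {M M' : ModuleCat.{0} S} (e : M ≅ M')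
    (N : ModuleCat.{0} S) (j : ℕ) (h : Subsingleton (Abelian.Ext M N j)) :
    Subsingleton (Abelian.Ext M' N j) := by
  refine subsingleton_of_forall_eq 0 fun x => ?_
  have h1 : (Abelian.Ext.mk₀ e.hom).comp x (zero_add j) = 0 := Subsingleton.elim _ _
  have h2 : (Abelian.Ext.mk₀ e.inv).comp ((Abelian.Ext.mk₀ e.hom).comp x (zero_add j))
    (zero_add j) = x := by
    rw [Abelian.Ext.mk₀_comp_mk₀_assoc, e.inv_hom_id, Abelian.Ext.mk₀_id_comp]
  rw [← h2, h1, Abelian.Ext.comp_zero]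

lemma ext_subsingleton_of_isZero {S : Type} [CommRing S] {M : ModuleCat.{0} S}
    (hM : Limits.IsZero M)
    (N : ModuleCat.{0} S) (j : ℕ) :
    Subsingleton (Abelian.Ext M N j) := by
  refine subsingleton_of_forall_eq 0 fun x => ?_
  have h2 := Abelian.Ext.mk₀_id_comp x
  rw [hM.eq_of_src (𝟙 M) 0, Abelian.Ext.mk₀_zero, Abelian.Ext.zero_comp] at h2
  exact h2.symm

lemma smul_id_comp {S : Type} [CommRing S] {M N : ModuleCat.{0} S} (x : S) {j : ℕ}
    (z : Abelian.Ext M N j) :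
    (Abelian.Ext.mk₀ (x • 𝟙 M)).comp z (zero_add j) = x • z := by
  rw [Abelian.Ext.mk₀_smul, Abelian.Ext.smul_comp, Abelian.Ext.mk₀_id_comp]

lemma ischebeck (R : Type) [CommRing R] [IsNoetherianRing R] [IsLocalRing R] (d : ℕ)
    (hd : ∀ j < d, Subsingleton (Abelian.Ext (ModuleCat.of R (ResidueField R))
      (ModuleCat.of R R) j)) (n : ℕ) :
    ∀ (M : Type) [AddCommGroup M] [Module R M] [Module.Finite R M],
      Module.supportDim R M < n → ∀ j, j + n ≤ d →
      Subsingleton (Abelian.Ext (ModuleCat.of R M) (ModuleCat.of R R) j) := by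
  induction n with
  | zero =>
    intro M _ _ _ h j hj
    have : Module.supportDim R M = ⊥ := by
      cases hh : Module.supportDim R M with
      | bot => rfl
      | coe a => rw [hh] at h; exfalso; norm_cast at h
    rw [Module.supportDim_eq_bot_iff_subsingleton] at this
    exact ext_subsingleton_of_isZero (ModuleCat.isZero_of_subsingleton _) _ _
  | succ n ih =>
    intro M _ _ hfin
    refine IsNoetherianRing.induction_on_isQuotientEquivQuotientPrime R hfin
      (motive := fun N _ _ _ => Module.supportDim R N < ((n + 1 : ℕ) : WithBot ℕ∞) →
        ∀ j, j + (n + 1) ≤ d →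
      Subsingleton (Abelian.Ext (ModuleCat.of R N) (ModuleCat.of R R) j)) ?_ ?_ ?_
    · intro N _ _ _ _ _ j _
      exact ext_subsingleton_of_isZero (ModuleCat.isZero_of_subsingleton _) _ _
    · intro N _ _ _ p e hdim j hj
      by_cases hp : p.1 = maximalIdeal R
      · have e' : ModuleCat.of R (ResidueField R) ≅ ModuleCat.of R N :=
          LinearEquiv.toModuleIso ((Submodule.quotEquivOfEq _ _ hp.symm).trans e.symm :
            ResidueField R ≃ₗ[R] N)
        exact ext_subsingleton_of_iso e' _ _ (hd j (by omega))
      · have hle : p.1 ≤ maximalIdeal R := IsLocalRing.le_maximalIdeal p.2.ne_top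
        obtain ⟨x, hxm, hxp⟩ := SetLike.exists_of_lt (lt_of_le_of_ne hle hp)
        have hreg : IsSMulRegular N x := by
          intro u v huv
          have : Function.Injective (fun y : R ⧸ p.1 => x • y) := by
            intro y z hyz
            have : (Ideal.Quotient.mk p.1 x) * y = (Ideal.Quotient.mk p.1 x) * z := by
              simpa [Algebra.smul_def] using hyz
            exact mul_left_cancel₀ (by rwa [Ne, Ideal.Quotient.eq_zero_iff_mem]) this
          apply e.injective
          apply this
          simpa using congrArg e huv
        have h1 := Module.supportDim_quotSMulTop_succ_eq_supportDim hreg hxm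
        have hlt : Module.supportDim R (QuotSMulTop x N) < (n : WithBot ℕ∞) := by
          rw [← h1] at hdim
          cases hh : Module.supportDim R (QuotSMulTop x N) with
          | bot => exact WithBot.bot_lt_coe _
          | coe a =>
            rw [hh] at hdim
            norm_cast at hdim ⊢
            push_cast at hdim
            by_contra hc
            exact absurd hdim (not_lt.mpr (add_le_add (not_lt.mp hc) le_rfl))
        have h2 := ih (QuotSMulTop x N) hlt (1 + j) (by omega)
        have hS := IsSMulRegular.smulShortComplex_shortExact (M := ModuleCat.of R N) hreg
        have hsurj : ∀ y : Abelian.Ext (ModuleCat.of R N) (ModuleCat.of R R) j,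
            ∃ z : Abelian.Ext (ModuleCat.of R N) (ModuleCat.of R R) j, x • z = y := by
          intro y
          have h2' : Subsingleton (Abelian.Ext ((ModuleCat.of R N).smulShortComplex x).X₃
            (ModuleCat.of R R) (1 + j)) := h2
          obtain ⟨z, hz⟩ := Abelian.Ext.contravariant_sequence_exact₁ hS _
            (y : Abelian.Ext ((ModuleCat.of R N).smulShortComplex x).X₁ _ j) rfl
            (Subsingleton.elim _ _)
          refine ⟨z, ?_⟩
          exact (smul_id_comp (M := ModuleCat.of R N) x z).symm.trans hz
        have htop : (⊤ : Submodule R (Abelian.Ext (ModuleCat.of R N) (ModuleCat.of R R) j)) ≤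
            maximalIdeal R • ⊤ := by
          intro y _
          obtain ⟨z, rfl⟩ := hsurj y
          exact Submodule.smul_mem_smul hxm trivial
        have := Submodule.eq_bot_of_le_smul_of_le_jacobson_bot _ _
          (Module.Finite.fg_top) htop (IsLocalRing.maximalIdeal_le_jacobson _)
        exact (Submodule.subsingleton_iff R).mp (subsingleton_of_bot_eq_top this.symm)
    · intro N₁ _ _ _ N₂ _ _ _ N₃ _ _ _ f g hf hg hfg h1 h3 hdim j hj
      have i1 := h1 (lt_of_le_of_lt (Module.supportDim_le_of_injective f hf) hdim) j hj
      have i3 := h3 (lt_of_le_of_lt (Module.supportDim_le_of_surjective g hg) hdim) j hj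
      let S := ModuleCat.shortComplexOfCompEqZero f g hfg.linearMap_comp_eq_zero
      have hS : S.ShortExact :=
        { exact := ModuleCat.shortComplex_exact _ hfg
          mono_f := (ModuleCat.mono_iff_injective _).2 hf
          epi_g := (ModuleCat.epi_iff_surjective _).2 hg }
      refine subsingleton_of_forall_eq 0 fun x => ?_
      have i1' : Subsingleton (Abelian.Ext S.X₁ (ModuleCat.of R R) j) := i1
      have i3' : Subsingleton (Abelian.Ext S.X₃ (ModuleCat.of R R) j) := i3
      obtain ⟨z, hz⟩ := Abelian.Ext.contravariant_sequence_exact₂ hS _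
            (x : Abelian.Ext S.X₂ _ j) (Subsingleton.elim _ _)
      rw [← hz, Subsingleton.elim z 0, Abelian.Ext.comp_zero]

lemma dim_loc_add (R : Type) [CommRing R] [IsNoetherianRing R] [IsLocalRing R]
    (d : ℕ) (hd : ringKrullDim R = d) (p : Ideal R) [hp : p.IsPrime] :
    ∃ h n : ℕ, ringKrullDim (Localization.AtPrime p) = h ∧ ringKrullDim (R ⧸ p) = n ∧
      h + n ≤ d := by
  have h1 := IsLocalization.AtPrime.ringKrullDim_eq_height p (Localization.AtPrime p)
  have h2 := (PrimeSpectrum.height_eq_orderHeight (⟨p, hp⟩ : PrimeSpectrum R))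
  have h3 : ringKrullDim (R ⧸ p) = Order.coheight (⟨p, hp⟩ : PrimeSpectrum R) := by
    rw [ringKrullDim_quotient, Order.coheight_eq_krullDim_Ici]
    rfl
  have h4 := Order.krullDim_eq_iSup_height_add_coheight_of_nonempty (α := PrimeSpectrum R)
  rw [ringKrullDim] at hd
  rw [hd] at h4
  have h5 : Order.height (⟨p, hp⟩ : PrimeSpectrum R) + Order.coheight (⟨p, hp⟩ : PrimeSpectrum R)
      ≤ (d : ℕ∞) := by
    have : (d : ℕ∞) = ⨆ a : PrimeSpectrum R, Order.height a + Order.coheight a := by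
      exact_mod_cast h4
    rw [this]
    exact le_iSup (fun a : PrimeSpectrum R => Order.height a + Order.coheight a) ⟨p, hp⟩
  have hh : Order.height (⟨p, hp⟩ : PrimeSpectrum R) ≠ ⊤ := by
    intro h; rw [h] at h5; simp at h5
  have hc : Order.coheight (⟨p, hp⟩ : PrimeSpectrum R) ≠ ⊤ := by
    intro h; rw [h] at h5; simp at h5
  obtain ⟨a, ha⟩ := ENat.ne_top_iff_exists.mp hh
  obtain ⟨b, hb⟩ := ENat.ne_top_iff_exists.mp hc
  refine ⟨a, b, ?_, ?_, ?_⟩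
  · rw [h1]; change ((⟨p, hp⟩ : PrimeSpectrum R).asIdeal.height : WithBot ℕ∞) = _
    rw [h2, ← ha]; rfl
  · rw [h3, ← hb]; rfl
  · rw [← ha, ← hb] at h5; exact_mod_cast h5

lemma support_residueField (S : Type) [CommRing S] [IsLocalRing S] :
    Module.support S (ResidueField S) ⊆ PrimeSpectrum.zeroLocus (maximalIdeal S) := by
  have h : Module.support S (S ⧸ maximalIdeal S) = PrimeSpectrum.zeroLocus (maximalIdeal S) := by
    rw [Module.support_eq_zeroLocus, Ideal.annihilator_quotient]
  exact h.le

lemma cm_localize (R : Type) [CommRing R] [IsNoetherianRing R] [IsLocalRing R] (d : ℕ)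
    (hdim : ringKrullDim R = d)
    (hd : ∀ j < d, Subsingleton (Abelian.Ext (ModuleCat.of R (ResidueField R))
      (ModuleCat.of R R) j)) (p : Ideal R) [p.IsPrime] (j : ℕ)
    (hj : (j : WithBot ℕ∞) < ringKrullDim (Localization.AtPrime p)) :
    Subsingleton (Abelian.Ext
      (ModuleCat.of (Localization.AtPrime p) (ResidueField (Localization.AtPrime p)))
      (ModuleCat.of (Localization.AtPrime p) (Localization.AtPrime p)) j) := by
  obtain ⟨h, n, hh, hn, hle⟩ := dim_loc_add R d hdim p
  rw [hh] at hj
  have hj' : j < h := by exact_mod_cast hj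
  have hext : ∀ i < h, Subsingleton (Abelian.Ext (ModuleCat.of R (R ⧸ p))
      (ModuleCat.of R R) i) := by
    intro i hi
    refine ischebeck R d hd (n + 1) (R ⧸ p) ?_ i (by omega)
    rw [Module.supportDim_quotient_eq_ringKrullDim, hn]
    norm_cast; omega
  have hpt : p • (⊤ : Submodule R R) < ⊤ := by
    rw [lt_top_iff_ne_top]
    simpa using Ideal.IsPrime.ne_top inferInstance
  have hsupp : Module.support R (R ⧸ p) = PrimeSpectrum.zeroLocus p := by
    rw [Module.support_eq_zeroLocus, Ideal.annihilator_quotient]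
  obtain ⟨rs, hlen, hmem, hreg⟩ := ModuleCat.exists_isRegular_of_exists_subsingleton_ext p h
    (ModuleCat.of R R) hpt (ModuleCat.of R (R ⧸ p)) hsupp hext
  have hreg' := RingTheory.Sequence.IsWeaklyRegular.isRegular_of_isLocalization_of_mem
    (Localization.AtPrime p) p hreg.1 hmem
  refine ModuleCat.subsingleton_ext_of_exists_isRegular (maximalIdeal (Localization.AtPrime p))
    (ModuleCat.of _ (ResidueField (Localization.AtPrime p))) ?_
    (ModuleCat.of _ (Localization.AtPrime p)) ?_ _ ?_ hreg' j (by simpa [hlen] using hj')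
  · exact support_residueField _
  · rw [lt_top_iff_ne_top]
    change maximalIdeal (Localization.AtPrime p) •
      (⊤ : Submodule _ (Localization.AtPrime p)) ≠ ⊤
    simpa using Ideal.IsPrime.ne_top inferInstance
  · intro r hr
    rcases List.mem_map.mp hr with ⟨r, hr2, rfl⟩
    rw [IsLocalization.AtPrime.to_map_mem_maximal_iff _ p]
    exact hmem r hr2


/-- `K` is an `i`-th syzygy of `M`. -/
def IsSyz (R : Type) [CommRing R] : ℕ → ModuleCat.{0} R → ModuleCat.{0} R → Prop
  | 0, M, K => K = M
  | i + 1, M, K => ∃ L : ModuleCat.{0} R, IsSyz R i M L ∧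
      ∃ (n : ℕ) (f : (Fin n → R) →ₗ[R] L), Function.Surjective f ∧
        K = ModuleCat.of R (LinearMap.ker f)

lemma exists_surj (R : Type) [CommRing R] (L : Type) [AddCommGroup L] [Module R L]
    [Module.Finite R L] : ∃ (n : ℕ) (f : (Fin n → R) →ₗ[R] L), Function.Surjective f :=
  Module.Finite.exists_fin' R L

lemma IsSyz.finite {R : Type} [CommRing R] [IsNoetherianRing R] {M : ModuleCat.{0} R}
    (hM : Module.Finite R M) : ∀ (i : ℕ) (K : ModuleCat.{0} R), IsSyz R i M K →
      Module.Finite R K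
  | 0, K, h => by cases h; exact hM
  | i + 1, K, ⟨L, hL, n, f, hf, h⟩ => by
      subst h
      change Module.Finite R (LinearMap.ker f)
      infer_instance

lemma exists_syz {R : Type} [CommRing R] [IsNoetherianRing R] (M : ModuleCat.{0} R)
    (hM : Module.Finite R M) : ∀ (i : ℕ), ∃ K, IsSyz R i M K
  | 0 => ⟨M, rfl⟩
  | i + 1 => by
      obtain ⟨L, hL⟩ := exists_syz M hM i
      have := hL.finite hM
      obtain ⟨n, f, hf⟩ := exists_surj R L
      exact ⟨_, L, hL, n, f, hf, rfl⟩

lemma mkShortExact {S : Type} [CommRing S] {A B C : Type} [AddCommGroup A] [AddCommGroup B]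
    [AddCommGroup C] [Module S A] [Module S B] [Module S C] (f : A →ₗ[S] B) (g : B →ₗ[S] C)
    (hf : Function.Injective f) (hg : Function.Surjective g) (h : Function.Exact f g) :
    (ModuleCat.shortComplexOfCompEqZero f g h.linearMap_comp_eq_zero).ShortExact :=
  { exact := ModuleCat.shortComplex_exact _ h
    mono_f := (ModuleCat.mono_iff_injective _).2 hf
    epi_g := (ModuleCat.epi_iff_surjective _).2 hg }

lemma loc_exact {R : Type} [CommRing R] (p : Ideal R) [p.IsPrime] {M L : Type}
    [AddCommGroup M] [AddCommGroup L] [Module R M] [Module R L] (f : M →ₗ[R] L)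
    (hf : Function.Surjective f) :
    Function.Injective (LocalizedModule.map p.primeCompl (LinearMap.ker f).subtype) ∧
    Function.Surjective (LocalizedModule.map p.primeCompl f) ∧
    Function.Exact (LocalizedModule.map p.primeCompl (LinearMap.ker f).subtype)
      (LocalizedModule.map p.primeCompl f) := by
  refine ⟨?_, ?_, ?_⟩
  · exact LocalizedModule.map_injective p.primeCompl _ (Submodule.injective_subtype _)
  · exact LocalizedModule.map_surjective p.primeCompl _ hf
  · exact LocalizedModule.map_exact p.primeCompl _ _ (LinearMap.exact_subtype_ker_map f)

lemma loc_exact' {R : Type} [CommRing R] (p : Ideal R) [p.IsPrime] {M L : Type}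
    [AddCommGroup M] [AddCommGroup L] [Module R M] [Module R L] (f : M →ₗ[R] L)
    (hf : Function.Surjective f) :
    ∃ (u : LocalizedModule p.primeCompl (LinearMap.ker f) →ₗ[Localization.AtPrime p]
        LocalizedModule p.primeCompl M)
      (v : LocalizedModule p.primeCompl M →ₗ[Localization.AtPrime p]
        LocalizedModule p.primeCompl L),
    Function.Injective u ∧ Function.Surjective v ∧ Function.Exact u v :=
  ⟨_, _, loc_exact p f hf⟩

lemma proj_ker {S : Type} [CommRing S] {A B C : Type} [AddCommGroup A] [AddCommGroup B]
    [AddCommGroup C] [Module S A] [Module S B] [Module S C] (f : A →ₗ[S] B) (g : B →ₗ[S] C)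
    (hf : Function.Injective f) (hg : Function.Surjective g) (h : Function.Exact f g)
    [Module.Projective S B] [Module.Projective S C] : Module.Projective S A := by
  obtain ⟨s, hs⟩ := Module.projective_lifting_property g LinearMap.id hg
  have hspl := (h.split_tfae' (f := f) (g := g)).out 0 1
  obtain ⟨_, l, hl⟩ := hspl.mp ⟨hf, s, hs⟩
  exact Module.Projective.of_split f l hl

lemma free_of_proj {S : Type} [CommRing S] [IsLocalRing S] {A : Type} [AddCommGroup A]
    [Module S A] [Module.Finite S A] [Module.Projective S A] : Module.Free S A :=
  Module.free_of_flat_of_isLocalRing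

lemma proj_of_subsingleton {S : Type} [CommRing S] {A : Type} [AddCommGroup A]
    [Module S A] [Subsingleton A] : Module.Projective S A := inferInstance

lemma ext_free_subsingleton {S : Type} [CommRing S] (X : ModuleCat.{0} S) (j : ℕ)
    (h : Subsingleton (Abelian.Ext X (ModuleCat.of S S) j)) (F : Type) [AddCommGroup F]
    [Module S F] [Module.Free S F] [Module.Finite S F] :
    Subsingleton (Abelian.Ext X (ModuleCat.of S F) j) := by
  let b := Module.Free.chooseBasis S F
  refine subsingleton_of_forall_eq 0 fun x => ?_
  have hid : 𝟙 (ModuleCat.of S F) = ∑ i, ModuleCat.ofHom (b.coord i) ≫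
      ModuleCat.ofHom (LinearMap.toSpanSingleton S F (b i)) := by
    apply ModuleCat.hom_ext
    rw [ModuleCat.hom_sum]
    ext y
    simp [b.sum_repr]
  rw [← Abelian.Ext.comp_mk₀_id x, hid, Abelian.Ext.mk₀_sum, Abelian.Ext.comp_sum]
  refine Finset.sum_eq_zero fun i _ => ?_
  rw [← Abelian.Ext.mk₀_comp_mk₀, ← Abelian.Ext.comp_assoc_of_second_deg_zero,
    Subsingleton.elim (x.comp (Abelian.Ext.mk₀ (ModuleCat.ofHom (b.coord i))) (add_zero j)) 0,
    Abelian.Ext.zero_comp]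

lemma loc_free {R : Type} [CommRing R] (p : Ideal R) [p.IsPrime] (n : ℕ) :
    Module.Free (Localization.AtPrime p) (LocalizedModule p.primeCompl (Fin n → R)) :=
  Module.free_of_isLocalizedModule p.primeCompl (LocalizedModule.mkLinearMap p.primeCompl _)

lemma loc_fin {R : Type} [CommRing R] (p : Ideal R) [p.IsPrime] (M : Type) [AddCommGroup M]
    [Module R M] [Module.Finite R M] :
    Module.Finite (Localization.AtPrime p) (LocalizedModule p.primeCompl M) :=
  Module.Finite.of_isLocalizedModule p.primeCompl (LocalizedModule.mkLinearMap p.primeCompl _)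

lemma ext_sub_left {S : Type} [CommRing S] {A B C : Type} [AddCommGroup A] [AddCommGroup B]
    [AddCommGroup C] [Module S A] [Module S B] [Module S C] (f : A →ₗ[S] B) (g : B →ₗ[S] C)
    (hf : Function.Injective f) (hg : Function.Surjective g) (h : Function.Exact f g)
    (X : ModuleCat.{0} S) (j : ℕ) (h2 : Subsingleton (Abelian.Ext X (ModuleCat.of S B) j))
    (h3 : ∀ j', j' + 1 = j → Subsingleton (Abelian.Ext X (ModuleCat.of S C) j')) :
    Subsingleton (Abelian.Ext X (ModuleCat.of S A) j) := by
  have hS := mkShortExact f g hf hg h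
  refine subsingleton_of_forall_eq 0 fun x => ?_
  cases j with
  | zero =>
    obtain ⟨y, rfl⟩ := (Abelian.Ext.homEquiv₀ (X := X)).symm.surjective x
    have e : (Abelian.Ext.mk₀ y).comp (Abelian.Ext.mk₀ (ModuleCat.ofHom f)) (add_zero 0) = 0 :=
      Subsingleton.elim _ _
    rw [Abelian.Ext.mk₀_comp_mk₀, Abelian.Ext.mk₀_eq_zero_iff] at e
    have : Mono (ModuleCat.ofHom f) := (ModuleCat.mono_iff_injective _).2 hf
    have : y = 0 := Limits.zero_of_comp_mono _ e
    subst this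
    exact Abelian.Ext.mk₀_zero _ _
  | succ j =>
    have h2' : Subsingleton (Abelian.Ext X (ModuleCat.shortComplexOfCompEqZero f g
        h.linearMap_comp_eq_zero).X₂ (j + 1)) := h2
    obtain ⟨z, hz⟩ := Abelian.Ext.covariant_sequence_exact₁ _ hS x
      (Subsingleton.elim _ _) rfl
    have i3 : Subsingleton (Abelian.Ext X (ModuleCat.shortComplexOfCompEqZero f g
        h.linearMap_comp_eq_zero).X₃ j) := h3 j rfl
    rw [← hz, Subsingleton.elim z 0, Abelian.Ext.zero_comp]

lemma syz_depth {R : Type} [CommRing R] (p : Ideal R) [p.IsPrime]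
    (hR : ∀ j : ℕ, (j : WithBot ℕ∞) < ringKrullDim (Localization.AtPrime p) →
     Subsingleton (Abelian.Ext
      (ModuleCat.of (Localization.AtPrime p) (ResidueField (Localization.AtPrime p)))
      (ModuleCat.of (Localization.AtPrime p) (Localization.AtPrime p)) j))
    (M : ModuleCat.{0} R) : ∀ (i : ℕ) (K : ModuleCat.{0} R), IsSyz R i M K →
     ∀ j : ℕ, j < i → (j : WithBot ℕ∞) < ringKrullDim (Localization.AtPrime p) →
     Subsingleton (Abelian.Ext
      (ModuleCat.of (Localization.AtPrime p) (ResidueField (Localization.AtPrime p)))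
      (ModuleCat.of (Localization.AtPrime p) (LocalizedModule p.primeCompl K)) j)
  | 0, K, h => by intro j hj; omega
  | i + 1, K, ⟨L, hL, n, f, hf, h⟩ => by
      intro j hj hjd
      subst h
      obtain ⟨u, v, h1, h2, h3⟩ := loc_exact' p f hf
      have := loc_free p n
      have := loc_fin p (Fin n → R)
      have hF := ext_free_subsingleton _ j (hR j hjd) (LocalizedModule p.primeCompl (Fin n → R))
      refine ext_sub_left u v h1 h2 h3 _ j hF ?_
      intro j' hj'
      exact syz_depth p hR M i L hL j' (by omega) (lt_trans (by norm_cast; omega) hjd)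

lemma syz_proj {R : Type} [CommRing R] [IsNoetherianRing R] (p : Ideal R) [p.IsPrime]
    (M : ModuleCat.{0} R)
    (hM : Subsingleton (LocalizedModule p.primeCompl M)) : ∀ (i : ℕ) (K : ModuleCat.{0} R),
    IsSyz R i M K →
     Module.Projective (Localization.AtPrime p) (LocalizedModule p.primeCompl K)
  | 0, K, h => by subst h; exact proj_of_subsingleton
  | i + 1, K, ⟨L, hL, n, f, hf, h⟩ => by
      subst h
      obtain ⟨u, v, h1, h2, h3⟩ := loc_exact' p f hf
      have := loc_free p n
      have hp := syz_proj p M hM i L hL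
      exact proj_ker u v h1 h2 h3

lemma syz_memCM0 {R : Type} [CommRing R] [IsNoetherianRing R] [IsLocalRing R] (d : ℕ)
    (hdim : ringKrullDim R = d)
    (hd : ∀ j < d, Subsingleton (Abelian.Ext (ModuleCat.of R (ResidueField R))
      (ModuleCat.of R R) j)) (M : ModuleCat.{0} R) (hfin : Module.Finite R M)
    (hM : ∀ (p : Ideal R) [p.IsPrime], p ≠ maximalIdeal R →
      Subsingleton (LocalizedModule p.primeCompl M)) (i : ℕ) (hi : d ≤ i) (K : ModuleCat.{0} R)
    (hK : IsSyz R i M K) : MemCM0 R K := by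
  have hKf := hK.finite hfin
  refine ⟨hKf, ?_, ?_⟩
  · intro p hp
    obtain ⟨h, n, hh, hn, hle⟩ := dim_loc_add R d hdim p
    have : (h : ℕ∞) ≤ moduleDepth (Localization.AtPrime p) (LocalizedModule p.primeCompl K) := by
      rw [le_moduleDepth_iff]
      intro j hj
      exact syz_depth p (cm_localize R d hdim hd p) M i K hK j (by omega)
        (by rw [hh]; norm_cast)
    rw [hh]
    exact_mod_cast this
  · intro p hp hpm
    have := syz_proj p M (hM p hpm) i K hK
    have := loc_fin p K
    exact free_of_proj


lemma factor_of_kill {R : Type} [CommRing R] {X : Type} [AddCommGroup X] [Module R X] {n : ℕ}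
    (f : (Fin n → R) →ₗ[R] X) (hf : Function.Surjective f) (a : R)
    (h : ∀ x : Abelian.Ext (ModuleCat.of R X) (ModuleCat.of R (LinearMap.ker f)) 1, a • x = 0) :
    ∃ s : X →ₗ[R] (Fin n → R), ∀ x, f (s x) = a • x := by
  have hS := LinearMap.shortExact_shortComplexKer hf
  have h0 : (Abelian.Ext.mk₀ (a • 𝟙 (ModuleCat.of R X))).comp hS.extClass (zero_add 1) = 0 :=
    (smul_id_comp (M := ModuleCat.of R X) a hS.extClass).trans (h hS.extClass)
  obtain ⟨y, hy⟩ := Abelian.Ext.covariant_sequence_exact₃ _ hS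
    (Abelian.Ext.mk₀ (a • 𝟙 (ModuleCat.of R X))) _ h0
  obtain ⟨z, rfl⟩ := (Abelian.Ext.homEquiv₀ (X := ModuleCat.of R X)).symm.surjective y
  have hy' : (Abelian.Ext.mk₀ z).comp (Abelian.Ext.mk₀ (ModuleCat.ofHom f)) (add_zero 0) =
    Abelian.Ext.mk₀ (a • 𝟙 (ModuleCat.of R X)) := hy
  rw [Abelian.Ext.mk₀_comp_mk₀] at hy'
  have hz := Abelian.Ext.homEquiv₀.symm.injective hy'
  refine ⟨z.hom, fun x => ?_⟩
  have := congrArg (fun u : ModuleCat.of R X ⟶ ModuleCat.of R X => u.hom x) hz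
  simpa using this

open TensorProduct in
/-- `a` kills the first Tor of `A` and `B`. -/
def RKill {R : Type} [CommRing R] (a : R) (A B : Type) [AddCommGroup A] [Module R A]
    [AddCommGroup B] [Module R B] : Prop :=
  ∀ (n : ℕ) (g : (Fin n → R) →ₗ[R] B), Function.Surjective g → ∀ t : A ⊗[R] LinearMap.ker g,
    LinearMap.lTensor A (LinearMap.ker g).subtype t = 0 → a • t = 0

section
open TensorProduct
variable {R : Type} [CommRing R] (a : R)

lemma rl_comm {A A' B B' : Type} [AddCommGroup A] [Module R A] [AddCommGroup A'] [Module R A']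
    [AddCommGroup B] [Module R B] [AddCommGroup B'] [Module R B'] (f : A →ₗ[R] A')
    (g : B →ₗ[R] B') (t : A ⊗[R] B) :
    f.rTensor B' (g.lTensor A t) = g.lTensor A' (f.rTensor B t) := by
  rw [← LinearMap.comp_apply, ← LinearMap.comp_apply, LinearMap.rTensor_comp_lTensor,
    LinearMap.lTensor_comp_rTensor]

lemma rkill_of_factor {X : Type} [AddCommGroup X] [Module R X] {n : ℕ}
    (f : (Fin n → R) →ₗ[R] X) (s : X →ₗ[R] (Fin n → R)) (hs : ∀ x, f (s x) = a • x)
    (B : Type) [AddCommGroup B] [Module R B] : RKill a X B := by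
  intro m g hg t ht
  have h1 : s.rTensor _ t = 0 := by
    apply Module.Flat.lTensor_preserves_injective_linearMap (M := Fin n → R)
      (LinearMap.ker g).subtype (Submodule.injective_subtype _)
    rw [← rl_comm, ht, map_zero, map_zero]
  have h2 : f.rTensor (LinearMap.ker g) (s.rTensor _ t) = a • t := by
    rw [← LinearMap.comp_apply, ← LinearMap.rTensor_comp]
    have : f ∘ₗ s = a • LinearMap.id := by ext x; simp [hs]
    rw [this, LinearMap.rTensor_smul, LinearMap.rTensor_id]; rfl
  rw [← h2, h1, map_zero]

lemma balance {A' F A B' G B : Type} [AddCommGroup A'] [Module R A'] [AddCommGroup F] [Module R F]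
    [AddCommGroup A] [Module R A] [AddCommGroup B'] [Module R B'] [AddCommGroup G] [Module R G]
    [AddCommGroup B] [Module R B] [Module.Flat R F]
    (i : A' →ₗ[R] F) (π : F →ₗ[R] A) (hπ : Function.Surjective π) (hi : Function.Exact i π)
    (j : B' →ₗ[R] G) (ρ : G →ₗ[R] B) (hj : Function.Injective j) (hρ : Function.Surjective ρ)
    (hjρ : Function.Exact j ρ)
    (h : ∀ u : A' ⊗[R] B, i.rTensor B u = 0 → a • u = 0) (t : A ⊗[R] B')
    (ht : j.lTensor A t = 0) : a • t = 0 := by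
  obtain ⟨t', rfl⟩ := LinearMap.rTensor_surjective B' hπ t
  rw [← rl_comm] at ht
  obtain ⟨w, hw⟩ := (rTensor_exact G hi hπ _).mp ht
  have hu : i.rTensor B (ρ.lTensor A' w) = 0 := by
    rw [rl_comm, hw, ← LinearMap.comp_apply, ← LinearMap.lTensor_comp,
      hjρ.linearMap_comp_eq_zero, LinearMap.lTensor_zero, LinearMap.zero_apply]
  have hau := h _ hu
  rw [← map_smul] at hau
  obtain ⟨v, hv⟩ := (lTensor_exact A' hjρ hρ _).mp hau
  have h3 : a • t' = i.rTensor B' v := by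
    apply Module.Flat.lTensor_preserves_injective_linearMap (M := F) j hj
    rw [← rl_comm, hv, map_smul, map_smul, hw]
  rw [← map_smul, h3, ← LinearMap.comp_apply, ← LinearMap.rTensor_comp,
      hi.linearMap_comp_eq_zero, LinearMap.rTensor_zero, LinearMap.zero_apply]

lemma rkill_shift {A B : Type} [AddCommGroup A] [Module R A] [AddCommGroup B] [Module R B]
    {n : ℕ} (f : (Fin n → R) →ₗ[R] A) (hf : Function.Surjective f)
    {m : ℕ} (g : (Fin m → R) →ₗ[R] B) (hg : Function.Surjective g)
    (h : RKill a (LinearMap.ker f) B) : RKill a A (LinearMap.ker g) := by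
  intro k g2 hg2 t ht
  refine balance a (LinearMap.ker f).subtype f hf (LinearMap.exact_subtype_ker_map f)
    (LinearMap.ker g2).subtype g2 (Submodule.injective_subtype _) hg2
    (LinearMap.exact_subtype_ker_map g2) ?_ t ht
  intro u hu
  apply h m g hg u
  apply Module.Flat.rTensor_preserves_injective_linearMap (M := Fin m → R)
      (LinearMap.ker f).subtype (Submodule.injective_subtype _)
  rw [rl_comm, hu, map_zero, map_zero]

lemma rkill_syz : ∀ (i : ℕ) (M K : ModuleCat.{0} R), IsSyz R i M K → ∀ s : ℕ,
    (∀ B C : ModuleCat.{0} R, IsSyz R s B C → RKill a K C) →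
    ∀ B C : ModuleCat.{0} R, IsSyz R (s + i) B C → RKill a M C
  | 0, M, K, h, s, hK => by subst h; exact hK
  | i + 1, M, K, ⟨L, hL, n, f, hf, h⟩, s, hK => by
      subst h
      have := rkill_syz i M L hL (s + 1) ?_
      · rwa [show s + (i + 1) = s + 1 + i by omega]
      · rintro B C ⟨D, hD, m, g, hg, rfl⟩
        exact rkill_shift a f hf g hg (hK B D hD)

lemma rkill_quot (J : Ideal R) {C : Type} [AddCommGroup C] [Module R C]
    (h : RKill a (R ⧸ J) C) {n : ℕ} (g : (Fin n → R) →ₗ[R] C) (hg : Function.Surjective g)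
    (z : LinearMap.ker g) (hz : (z : Fin n → R) ∈ J • (⊤ : Submodule R (Fin n → R))) :
    a • z ∈ J • (⊤ : Submodule R (LinearMap.ker g)) := by
  have h1 := h n g hg ((1 : R ⧸ J) ⊗ₜ z) (by
    rw [LinearMap.lTensor_tmul]
    apply (quotTensorEquivQuotSMul (Fin n → R) J).injective
    rw [quotTensorEquivQuotSMul_mk_one_tmul, map_zero, Submodule.Quotient.mk_eq_zero]
    exact hz)
  rw [← TensorProduct.tmul_smul] at h1
  have h2 := congrArg (quotTensorEquivQuotSMul (LinearMap.ker g) J) h1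
  rwa [quotTensorEquivQuotSMul_mk_one_tmul, map_zero, Submodule.Quotient.mk_eq_zero] at h2

lemma krull_inter [IsNoetherianRing R] [IsLocalRing R] (p : Ideal R) {Z : Type} [AddCommGroup Z]
    [Module R Z] [Module.Finite R Z] (z : Z)
    (h : ∀ n : ℕ, z ∈ (p ⊔ maximalIdeal R ^ n) • (⊤ : Submodule R Z)) :
    z ∈ p • (⊤ : Submodule R Z) := by
  rw [← Submodule.Quotient.mk_eq_zero]
  have h1 := Ideal.iInf_pow_smul_eq_bot_of_isLocalRing (R := R)
    (M := Z ⧸ p • (⊤ : Submodule R Z)) (maximalIdeal R) (Ideal.IsPrime.ne_top inferInstance)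
  rw [← Submodule.mem_bot R, ← h1, Submodule.mem_iInf]
  intro n
  have h2 := h n
  rw [Submodule.sup_smul] at h2
  obtain ⟨u, hu, v, hv, rfl⟩ := Submodule.mem_sup.mp h2
  rw [Submodule.Quotient.mk_add, (Submodule.Quotient.mk_eq_zero _).mpr hu, zero_add]
  have h3 : (p • (⊤ : Submodule R Z)).mkQ v ∈
      Submodule.map (p • (⊤ : Submodule R Z)).mkQ (maximalIdeal R ^ n • ⊤) :=
    Submodule.mem_map_of_mem hv
  rw [Submodule.map_smul''] at h3
  exact Submodule.smul_mono le_rfl le_top h3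

end


lemma loc_quot_subsingleton {R : Type} [CommRing R] [IsLocalRing R] (J : Ideal R) (n : ℕ)
    (hJ : maximalIdeal R ^ n ≤ J) (q : Ideal R) [hq : q.IsPrime] (hqm : q ≠ maximalIdeal R) :
    Subsingleton (LocalizedModule q.primeCompl (R ⧸ J)) := by
  rw [LocalizedModule.subsingleton_iff]
  intro y
  obtain ⟨x, hxm, hxq⟩ := SetLike.exists_of_lt
    (lt_of_le_of_ne (IsLocalRing.le_maximalIdeal hq.ne_top) hqm)
  refine ⟨x ^ n, fun h => hxq (hq.mem_of_pow_mem n h), ?_⟩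
  obtain ⟨y, rfl⟩ := Ideal.Quotient.mk_surjective y
  rw [← Ideal.Quotient.mk_eq_mk, ← Submodule.Quotient.mk_smul, Submodule.Quotient.mk_eq_zero]
  exact J.mul_mem_right _ (hJ (Ideal.pow_mem_pow hxm n))

lemma key_mem {R : Type} [CommRing R] [IsNoetherianRing R] [IsLocalRing R] (d : ℕ)
    (hdim : ringKrullDim R = d)
    (hd : ∀ j < d, Subsingleton (Abelian.Ext (ModuleCat.of R (ResidueField R))
      (ModuleCat.of R R) j)) (a : R)
    (ha : ∀ K L : ModuleCat.{0} R, MemCM0 R K → MemCM0 R L →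
      ∀ x : Abelian.Ext K L 1, a • x = 0)
    (p : Ideal R) (B C : ModuleCat.{0} R) (hC : IsSyz R d B C)
    {n : ℕ} (g : (Fin n → R) →ₗ[R] C) (hg : Function.Surjective g)
    (z : LinearMap.ker g) (hz : (z : Fin n → R) ∈ p • (⊤ : Submodule R (Fin n → R))) :
    a • z ∈ p • (⊤ : Submodule R (LinearMap.ker g)) := by
  apply krull_inter
  intro k
  refine rkill_quot a _ ?_ g hg z (Submodule.smul_mono le_sup_left le_rfl hz)
  set J := p ⊔ maximalIdeal R ^ k with hJ
  have hfin : Module.Finite R (ModuleCat.of R (R ⧸ J)) := inferInstanceAs (Module.Finite R (R ⧸ J))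
  have hsub : ∀ (q : Ideal R) [q.IsPrime], q ≠ maximalIdeal R →
      Subsingleton (LocalizedModule q.primeCompl (ModuleCat.of R (R ⧸ J))) := by
    intro q _ hq
    exact loc_quot_subsingleton J k le_sup_right q hq
  obtain ⟨X, hX⟩ := exists_syz (ModuleCat.of R (R ⧸ J)) hfin d
  have hXf := hX.finite hfin
  obtain ⟨m, f, hf⟩ := exists_surj R X
  have h1 := syz_memCM0 d hdim hd _ hfin hsub d le_rfl X hX
  have h2 := syz_memCM0 d hdim hd _ hfin hsub (d + 1) (by omega) _ ⟨X, hX, m, f, hf, rfl⟩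
  obtain ⟨s, hs⟩ := factor_of_kill f hf a (ha X _ h1 h2)
  refine rkill_syz a d _ X hX 0 ?_ B C (by rwa [zero_add])
  intro _ D _
  exact rkill_of_factor a f s hs D


lemma pd_X3 {S : Type} [CommRing S] {A B C : Type} [AddCommGroup A] [AddCommGroup B]
    [AddCommGroup C] [Module S A] [Module S B] [Module S C] (f : A →ₗ[S] B) (g : B →ₗ[S] C)
    (hf : Function.Injective f) (hg : Function.Surjective g) (h : Function.Exact f g)
    [Module.Projective S B] (e : ℕ)
    (hA : HasProjectiveDimensionLT (ModuleCat.of S A) e) :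
    HasProjectiveDimensionLT (ModuleCat.of S C) (e + 1) := by
  have hS := mkShortExact f g hf hg h
  have hB : Projective (ModuleCat.of S B) := (IsProjective.iff_projective (R := S) B).mp inferInstance
  have hB1 := (projective_iff_hasProjectiveDimensionLT_one).mp hB
  have hB2 : HasProjectiveDimensionLT (ModuleCat.of S B) (e + 1) :=
    hasProjectiveDimensionLT_of_ge _ 1 (e + 1) (by omega)
  exact hS.hasProjectiveDimensionLT_X₃ e hA hB2

lemma syz_pd {R : Type} [CommRing R] (p : Ideal R) [p.IsPrime]
    (M : ModuleCat.{0} R) : ∀ (i e : ℕ) (K : ModuleCat.{0} R), IsSyz R i M K →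
     HasProjectiveDimensionLT
      (ModuleCat.of (Localization.AtPrime p) (LocalizedModule p.primeCompl K)) e →
     HasProjectiveDimensionLT
      (ModuleCat.of (Localization.AtPrime p) (LocalizedModule p.primeCompl M)) (i + e)
  | 0, e, K, h => by subst h; rw [zero_add]; exact id
  | i + 1, e, K, ⟨L, hL, n, f, hf, h⟩ => by
      subst h
      intro hK
      obtain ⟨u, v, h1, h2, h3⟩ := loc_exact' p f hf
      have := loc_free p n
      have h4 := syz_pd p M i (e + 1) L hL (pd_X3 u v h1 h2 h3 e hK)
      rwa [show i + 1 + e = i + (e + 1) by omega]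

lemma free_criterion {S : Type} [CommRing S] [IsLocalRing S] {A B C : Type} [AddCommGroup A]
    [AddCommGroup B]
    [AddCommGroup C] [Module S A] [Module S B] [Module S C] (f : A →ₗ[S] B) (g : B →ₗ[S] C)
    (hg : Function.Surjective g) (h : Function.Exact f g)
    [Module.Finite S A] [Module.Finite S B] [Module.Free S B]
    (hcr : ∀ z, f z ∈ maximalIdeal S • (⊤ : Submodule S B) →
      z ∈ maximalIdeal S • (⊤ : Submodule S A)) : Module.Free S C := by
  refine Module.free_of_lTensor_residueField_injective f g hg h ?_
  change Function.Injective (f.lTensor (S ⧸ maximalIdeal S))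
  rw [injective_iff_map_eq_zero]
  intro t ht
  obtain ⟨z, rfl⟩ := (TensorProduct.quotTensorEquivQuotSMul A (maximalIdeal S)).symm.surjective t
  obtain ⟨z, rfl⟩ := Submodule.Quotient.mk_surjective _ z
  rw [TensorProduct.quotTensorEquivQuotSMul_symm_mk, LinearMap.lTensor_tmul] at ht
  have h2 := congrArg (TensorProduct.quotTensorEquivQuotSMul B (maximalIdeal S)) ht
  rw [TensorProduct.quotTensorEquivQuotSMul_mk_one_tmul, map_zero,
    Submodule.Quotient.mk_eq_zero] at h2
  rw [(Submodule.Quotient.mk_eq_zero _).mpr (hcr z h2), map_zero]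

lemma mem_pi_smul {R : Type} [CommRing R] (p : Ideal R) {n : ℕ} (x : Fin n → R)
    (h : ∀ i, x i ∈ p) : x ∈ p • (⊤ : Submodule R (Fin n → R)) := by
  rw [pi_eq_sum_univ' x]
  exact Submodule.sum_mem _ fun i _ => Submodule.smul_mem_smul (h i) trivial

lemma mem_of_loc {R : Type} [CommRing R] (p : Ideal R) [hp : p.IsPrime] {n : ℕ}
    (x : Fin n → R) (s : p.primeCompl)
    (h : LocalizedModule.mk x s ∈ maximalIdeal (Localization.AtPrime p) •
      (⊤ : Submodule (Localization.AtPrime p) (LocalizedModule p.primeCompl (Fin n → R)))) :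
    x ∈ p • (⊤ : Submodule R (Fin n → R)) := by
  apply mem_pi_smul
  intro i
  let φ := IsLocalizedModule.mapExtendScalars p.primeCompl
    (LocalizedModule.mkLinearMap p.primeCompl (Fin n → R))
    (Algebra.linearMap R (Localization.AtPrime p)) (Localization.AtPrime p)
    (LinearMap.proj i : (Fin n → R) →ₗ[R] R)
  have h1 : φ (LocalizedModule.mk x s) ∈ maximalIdeal (Localization.AtPrime p) := by
    have := Submodule.mem_map_of_mem (f := φ) h
    rw [Submodule.map_smul''] at this
    have h5 := Submodule.smul_mono (le_refl (maximalIdeal (Localization.AtPrime p)))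
      (le_top (a := Submodule.map φ ⊤)) this
    simpa using h5
  have h2 : φ (LocalizedModule.mk x 1) = algebraMap R (Localization.AtPrime p) (x i) := by
    have := IsLocalizedModule.map_apply p.primeCompl
     (LocalizedModule.mkLinearMap p.primeCompl (Fin n → R))
     (Algebra.linearMap R (Localization.AtPrime p)) (LinearMap.proj i : (Fin n → R) →ₗ[R] R) x
    exact this
  have h3 : (LocalizedModule.mk x 1 : LocalizedModule p.primeCompl (Fin n → R)) =
      algebraMap R (Localization.AtPrime p) s.1 • LocalizedModule.mk x s := by
    rw [algebraMap_smul, LocalizedModule.smul'_mk]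
    exact (LocalizedModule.mk_cancel s x).symm
  rw [← IsLocalization.AtPrime.to_map_mem_maximal_iff (Localization.AtPrime p) p, ← h2, h3,
    map_smul]
  exact Ideal.mul_mem_left _ _ h1

lemma loc_mem {R : Type} [CommRing R] (p : Ideal R) [hp : p.IsPrime] {Z : Type} [AddCommGroup Z]
    [Module R Z] (z : Z) (h : z ∈ p • (⊤ : Submodule R Z)) :
    LocalizedModule.mk z 1 ∈ maximalIdeal (Localization.AtPrime p) •
      (⊤ : Submodule (Localization.AtPrime p) (LocalizedModule p.primeCompl Z)) := by
  refine Submodule.smul_induction_on h ?_ ?_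
  · intro r hr y _
    have : (LocalizedModule.mk (r • y) 1 : LocalizedModule p.primeCompl Z) =
      algebraMap R (Localization.AtPrime p) r • LocalizedModule.mk y 1 := by
      rw [algebraMap_smul, LocalizedModule.smul'_mk]
    rw [this]
    refine Submodule.smul_mem_smul ?_ trivial
    rwa [IsLocalization.AtPrime.to_map_mem_maximal_iff (Localization.AtPrime p) p]
  · intro x y hx hy
    have : (LocalizedModule.mk (x + y) 1 : LocalizedModule p.primeCompl Z) =
      LocalizedModule.mk x 1 + LocalizedModule.mk y 1 := by
      simpa using ((LocalizedModule.mkLinearMap p.primeCompl Z).map_add x y)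
    rw [this]
    exact Submodule.add_mem _ hx hy

lemma loc_free_of_key {R : Type} [CommRing R] [IsNoetherianRing R] (p : Ideal R) [hp : p.IsPrime]
    (a : R) (ha : a ∉ p) {C : Type} [AddCommGroup C] [Module R C] {n : ℕ}
    (g : (Fin n → R) →ₗ[R] C) (hg : Function.Surjective g)
    (h : ∀ z : LinearMap.ker g, (z : Fin n → R) ∈ p • (⊤ : Submodule R (Fin n → R)) →
      a • z ∈ p • (⊤ : Submodule R (LinearMap.ker g))) :
    Module.Free (Localization.AtPrime p) (LocalizedModule p.primeCompl C) := by
  obtain ⟨h1, h2, h3⟩ := loc_exact p g hg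
  have := loc_free p n
  have := loc_fin p (Fin n → R)
  have := loc_fin p (LinearMap.ker g)
  refine free_criterion (A := LocalizedModule p.primeCompl (LinearMap.ker g))
    (B := LocalizedModule p.primeCompl (Fin n → R)) _ _ h2 h3 ?_
  intro z hz
  induction z using LocalizedModule.induction_on with
  | _ z s =>
  have hz' : LocalizedModule.mk (z : Fin n → R) s ∈ maximalIdeal (Localization.AtPrime p) •
      (⊤ : Submodule (Localization.AtPrime p) (LocalizedModule p.primeCompl (Fin n → R))) := by
    simpa only [LocalizedModule.map_mk, Submodule.subtype_apply] using hz
  have h5 := loc_mem p _ (h z (mem_of_loc p _ s hz'))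
  have h6 : LocalizedModule.mk z s =
      (Localization.mk 1 (⟨a, ha⟩ * s) : Localization.AtPrime p) •
        (LocalizedModule.mk (a • z) 1 : LocalizedModule p.primeCompl (LinearMap.ker g)) := by
    rw [LocalizedModule.mk_smul_mk, mul_one, one_smul]
    exact (LocalizedModule.mk_cancel_common_left ⟨a, ha⟩ s z).symm
  rw [h6]
  exact Submodule.smul_mem _ _ h5

lemma residue_iso {R : Type} [CommRing R] (p : Ideal R) [hp : p.IsPrime] :
    Nonempty (LocalizedModule p.primeCompl (R ⧸ p) ≃ₗ[Localization.AtPrime p]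
      ResidueField (Localization.AtPrime p)) := by
  let f := Algebra.linearMap R (Localization.AtPrime p)
  let t := Submodule.toLocalizedQuotient' (Localization.AtPrime p) p.primeCompl f p
  have e1 := IsLocalizedModule.mapEquiv p.primeCompl
    (LocalizedModule.mkLinearMap p.primeCompl (R ⧸ p)) t (Localization.AtPrime p)
    (LinearEquiv.refl R (R ⧸ p))
  have e : Submodule.localized' (Localization.AtPrime p) p.primeCompl f p =
    maximalIdeal (Localization.AtPrime p) := by
    rw [← Localization.AtPrime.map_eq_maximalIdeal]
    exact Ideal.localized'_eq_map _ _ _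
  exact ⟨e1.trans (Submodule.quotEquivOfEq _ _ e)⟩

lemma pd_free {S : Type} [CommRing S] {A : Type} [AddCommGroup A]
    [Module S A] (h : Module.Free S A) : HasProjectiveDimensionLT (ModuleCat.of S A) 1 :=
  projective_iff_hasProjectiveDimensionLT_one.mp
    ((IsProjective.iff_projective (R := S) A).mp inferInstance)

lemma pd_residue {R : Type} [CommRing R] [IsNoetherianRing R] [IsLocalRing R] (d : ℕ)
    (hdim : ringKrullDim R = d)
    (hd : ∀ j < d, Subsingleton (Abelian.Ext (ModuleCat.of R (ResidueField R))
      (ModuleCat.of R R) j)) (a : R)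
    (ha : ∀ K L : ModuleCat.{0} R, MemCM0 R K → MemCM0 R L →
      ∀ x : Abelian.Ext K L 1, a • x = 0) (p : Ideal R) [p.IsPrime] (hap : a ∉ p) :
    HasProjectiveDimensionLT (ModuleCat.of (Localization.AtPrime p)
      (ResidueField (Localization.AtPrime p))) (d + 1) := by
  have hfin : Module.Finite R (ModuleCat.of R (R ⧸ p)) :=
    inferInstanceAs (Module.Finite R (R ⧸ p))
  obtain ⟨C, hC⟩ := exists_syz (ModuleCat.of R (R ⧸ p)) hfin d
  have := hC.finite hfin
  obtain ⟨n, g, hg⟩ := exists_surj R C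
  have hfree := loc_free_of_key p a hap g hg
    (fun z hz => key_mem d hdim hd a ha p _ C hC g hg z hz)
  have h1 := pd_free (S := Localization.AtPrime p) (A := LocalizedModule p.primeCompl C) hfree
  have h2 := syz_pd p _ d 1 C hC h1
  obtain ⟨e⟩ := residue_iso p
  exact hasProjectiveDimensionLT_of_iso (LinearEquiv.toModuleIso e) (d + 1)


lemma pd_ker {S : Type} [CommRing S] {A B C : Type} [AddCommGroup A] [AddCommGroup B]
    [AddCommGroup C] [Module S A] [Module S B] [Module S C] (f : A →ₗ[S] B) (g : B →ₗ[S] C)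
    (hf : Function.Injective f) (hg : Function.Surjective g) (h : Function.Exact f g)
    (hBf : Module.Free S B) (e : ℕ)
    (hC : HasProjectiveDimensionLT (ModuleCat.of S C) (e + 2)) :
    HasProjectiveDimensionLT (ModuleCat.of S A) (e + 1) := by
  have hS := mkShortExact f g hf hg h
  have hB1 := pd_free hBf
  have hB2 : HasProjectiveDimensionLT (ModuleCat.of S B) (e + 1) :=
    hasProjectiveDimensionLT_of_ge _ 1 (e + 1) (by omega)
  exact hS.hasProjectiveDimensionLT_X₁ (e + 1) hB2 hC

lemma proj_of_pd {S : Type} [CommRing S] {A : Type} [AddCommGroup A]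
    [Module S A] (h : HasProjectiveDimensionLT (ModuleCat.of S A) 1) : Module.Projective S A :=
  (IsProjective.iff_projective (R := S) A).mpr (projective_iff_hasProjectiveDimensionLT_one.mpr h)

lemma mem_smul_of_socle {S : Type} [CommRing S] [IsLocalRing S] (s : S) (hs : s ≠ 0)
    {A : Type} [AddCommGroup A] [Module S A] [Module.Free S A] (z : A) (hz : s • z = 0) :
    z ∈ maximalIdeal S • (⊤ : Submodule S A) := by
  let b := Module.Free.chooseBasis S A
  rw [← b.linearCombination_repr z, Finsupp.linearCombination_apply]
  refine Submodule.sum_mem _ fun i _ => Submodule.smul_mem_smul ?_ trivial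
  rw [mem_maximalIdeal, mem_nonunits_iff]
  intro hu
  have h1 : s * b.repr z i = 0 := by
    have := congrArg (fun w => b.repr w i) hz
    simpa using this
  exact hs ((hu.mul_left_eq_zero).mp h1)

lemma depth_zero_free {S : Type} [CommRing S] [IsNoetherianRing S] [IsLocalRing S] (s : S)
    (hs : s ≠ 0)
    (hsm : ∀ x ∈ maximalIdeal S, s * x = 0) : ∀ (n : ℕ) (A : Type) [AddCommGroup A] [Module S A]
    [Module.Finite S A], HasProjectiveDimensionLT (ModuleCat.of S A) (n + 1) → Module.Free S A
  | 0, A, _, _, _, h => by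
      have := proj_of_pd h
      exact free_of_proj
  | n + 1, A, _, _, _, h => by
      obtain ⟨k, g, hg⟩ := exists_surj S A
      have h1 := pd_ker (LinearMap.ker g).subtype g (Submodule.injective_subtype _) hg
        (LinearMap.exact_subtype_ker_map g) inferInstance n h
      have h2 := depth_zero_free s hs hsm n (LinearMap.ker g) h1
      refine free_criterion (LinearMap.ker g).subtype g hg (LinearMap.exact_subtype_ker_map g) ?_
      intro z hz
      refine mem_smul_of_socle s hs z ?_
      apply Subtype.ext
      change s • (z : Fin k → S) = 0
      have hz : (z : Fin k → S) ∈ maximalIdeal S • (⊤ : Submodule S (Fin k → S)) := hz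
      generalize (z : Fin k → S) = w at hz
      refine Submodule.smul_induction_on hz ?_ ?_
      · intro r hr y _
        rw [smul_smul, hsm r hr, zero_smul]
      · intro x y hx hy
        rw [smul_add, hx, hy, add_zero]

lemma regular_of_depth_zero {S : Type} [CommRing S] [IsNoetherianRing S] [IsLocalRing S] (s : S)
    (hs : s ≠ 0)
    (hsm : ∀ x ∈ maximalIdeal S, s * x = 0) (n : ℕ)
    (h : HasProjectiveDimensionLT (ModuleCat.of S (ResidueField S)) (n + 1)) :
    IsRegularLocal S := by
  have hf := depth_zero_free s hs hsm n (ResidueField S) h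
  have hm : maximalIdeal S = ⊥ := by
    rw [eq_bot_iff]
    intro x hx
    have : FaithfulSMul S (ResidueField S) := inferInstance
    refine (Submodule.mem_bot _).mpr (this.eq_of_smul_eq_smul fun y => ?_)
    rw [zero_smul, Algebra.smul_def, ResidueField.algebraMap_eq, (residue_eq_zero_iff x).mpr hx,
      zero_mul]
  refine ⟨inferInstance, ∅, ?_, ?_⟩
  · rw [hm]; simp
  · rw [ringKrullDim_eq_zero_of_isField (isField_iff_maximalIdeal_eq.mpr hm)]; simp

lemma exists_nzd {S : Type} [CommRing S] [IsNoetherianRing S] [IsLocalRing S]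
    (h : ¬ ∃ s : S, s ≠ 0 ∧ ∀ x ∈ maximalIdeal S, s * x = 0) :
    ∃ x ∈ maximalIdeal S, x ∉ maximalIdeal S ^ 2 ∧ x ∈ nonZeroDivisors S := by
  by_contra! hc
  have hfin := associatedPrimes.finite S S
  have hsub : (maximalIdeal S : Set S) ⊆ ⋃ i ∈ (↑(insert (maximalIdeal S ^ 2) hfin.toFinset) :
      Set (Ideal S)), ((id i : Ideal S) : Set S) := by
    intro x hx
    by_cases h2 : x ∈ maximalIdeal S ^ 2
    · simp only [Set.mem_iUnion]
      exact ⟨_, by simp, h2⟩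
    · have h3 : x ∈ (nonZeroDivisors S : Set S)ᶜ := hc x hx h2
      rw [← biUnion_associatedPrimes_eq_compl_nonZeroDivisors] at h3
      simp only [Set.mem_iUnion] at h3 ⊢
      obtain ⟨P, hP, hxP⟩ := h3
      exact ⟨P, by simp [hP], hxP⟩
  rw [Ideal.subset_union_prime (maximalIdeal S ^ 2) (maximalIdeal S ^ 2)] at hsub
  · obtain ⟨P, hP, hle⟩ := hsub
    rw [Finset.mem_insert] at hP
    rcases hP with rfl | hP
    · have hm : maximalIdeal S = ⊥ := by
        refine Submodule.eq_bot_of_le_smul_of_le_jacobson_bot (maximalIdeal S) _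
          (IsNoetherian.noetherian _) ?_ (maximalIdeal_le_jacobson _)
        simpa [pow_two] using hle
      exact h ⟨1, one_ne_zero, fun x hx => by
        rw [hm] at hx
        simpa using hx⟩
    · have hP' : P ∈ associatedPrimes S S := by simpa using hP
      obtain ⟨hp, s, rfl⟩ := (isAssociatedPrime_iff).mp hP'
      refine h ⟨s, ?_, ?_⟩
      · rintro rfl
        apply hp.ne_top
        rw [Ideal.eq_top_iff_one]
        simp [Submodule.mem_colon_singleton]
      · intro x hx
        have := hle hx
        rw [id, Submodule.mem_colon_singleton, Submodule.mem_bot, smul_eq_mul, mul_comm] at this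
        exact this
  · intro i hi h1 _
    rw [Finset.mem_insert] at hi
    rcases hi with rfl | hi
    · exact absurd rfl h1
    · have hP' : i ∈ associatedPrimes S S := by simpa using hi
      exact hP'.1


open TensorProduct in
lemma tensor_exact {S : Type} [CommRing S] (x : S) {A B : Type} [AddCommGroup A] [AddCommGroup B]
    [Module S A] [Module S B] (g : B →ₗ[S] A) (hg : Function.Surjective g)
    (hx : ∀ a : A, x • a = 0 → a = 0) :
    ∃ (u : (S ⧸ Ideal.span {x}) ⊗[S] (LinearMap.ker g) →ₗ[S ⧸ Ideal.span {x}]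
        (S ⧸ Ideal.span {x}) ⊗[S] B)
      (v : (S ⧸ Ideal.span {x}) ⊗[S] B →ₗ[S ⧸ Ideal.span {x}] (S ⧸ Ideal.span {x}) ⊗[S] A),
    Function.Injective u ∧ Function.Surjective v ∧ Function.Exact u v := by
  refine ⟨(LinearMap.ker g).subtype.baseChange _, g.baseChange _, ?_, ?_, ?_⟩
  · rw [injective_iff_map_eq_zero]
    intro t ht
    obtain ⟨z, rfl⟩ := (TensorProduct.quotTensorEquivQuotSMul (LinearMap.ker g)
      (Ideal.span {x})).symm.surjective t
    obtain ⟨z, rfl⟩ := Submodule.Quotient.mk_surjective _ z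
    rw [TensorProduct.quotTensorEquivQuotSMul_symm_mk, LinearMap.baseChange_tmul] at ht
    have h2 := congrArg (TensorProduct.quotTensorEquivQuotSMul B (Ideal.span {x})) ht
    rw [TensorProduct.quotTensorEquivQuotSMul_mk_one_tmul, map_zero,
      Submodule.Quotient.mk_eq_zero, Submodule.ideal_span_singleton_smul] at h2
    obtain ⟨y, _, hy⟩ := h2
    have hy : x • y = (z : B) := hy
    have hgy : g y = 0 := hx _ (by rw [← map_smul, hy]; exact z.2)
    have hz : z ∈ Ideal.span {x} • (⊤ : Submodule S (LinearMap.ker g)) := by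
      have : z = x • (⟨y, hgy⟩ : LinearMap.ker g) := Subtype.ext hy.symm
      rw [this]
      exact Submodule.smul_mem_smul (Ideal.mem_span_singleton_self x) trivial
    rw [(Submodule.Quotient.mk_eq_zero _).mpr hz, map_zero]
  · exact LinearMap.lTensor_surjective _ hg
  · exact lTensor_exact _ (LinearMap.exact_subtype_ker_map g) hg

open TensorProduct in
lemma pd_quot {S : Type} [CommRing S] [IsNoetherianRing S] (x : S) (hx : x ∈ nonZeroDivisors S) :
    ∀ (n : ℕ) (A : Type) [AddCommGroup A] [Module S A] [Module.Finite S A]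
    (_ : ∀ a : A, x • a = 0 → a = 0),
    HasProjectiveDimensionLT (ModuleCat.of S A) (n + 1) →
    HasProjectiveDimensionLT (ModuleCat.of (S ⧸ Ideal.span {x}) ((S ⧸ Ideal.span {x}) ⊗[S] A)) (n + 1)
  | 0, A, _, _, _, hA, h => by
      have := proj_of_pd h
      exact projective_iff_hasProjectiveDimensionLT_one.mp
        ((IsProjective.iff_projective (R := S ⧸ Ideal.span {x}) _).mp inferInstance)
  | n + 1, A, _, _, _, hA, h => by
      obtain ⟨k, g, hg⟩ := exists_surj S A
      have h1 := pd_ker (LinearMap.ker g).subtype g (Submodule.injective_subtype _) hg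
        (LinearMap.exact_subtype_ker_map g) inferInstance n h
      have h2 := pd_quot x hx n (LinearMap.ker g) (by
        intro a ha
        apply Subtype.ext
        funext i
        have := congrFun (congrArg Subtype.val ha) i
        exact (mem_nonZeroDivisors_iff.mp hx).1 _ this) h1
      obtain ⟨u, v, hu, hv, huv⟩ := tensor_exact x g hg hA
      exact pd_X3 u v hu hv huv (n + 1) h2

lemma lift_residue {S : Type} [CommRing S] [IsLocalRing S] {T : Type} [AddCommGroup T]
    [Module S T] (t : T) (ht : ∀ y ∈ maximalIdeal S, y • t = 0) :
    ∃ i : ResidueField S →ₗ[S] T, i 1 = t := by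
  let i : (S ⧸ maximalIdeal S) →ₗ[S] T :=
    Submodule.liftQ (maximalIdeal S) (LinearMap.toSpanSingleton S T t) (fun y hy => by
      rw [LinearMap.mem_ker, LinearMap.toSpanSingleton_apply]; exact ht y hy)
  refine ⟨i, ?_⟩
  change LinearMap.toSpanSingleton S T t 1 = t
  simp

open TensorProduct in
lemma pd_resfield_quot {S : Type} [CommRing S] [IsNoetherianRing S] [IsLocalRing S] (x : S)
    (hxm : x ∈ maximalIdeal S) (hx2 : x ∉ maximalIdeal S ^ 2)
    [IsLocalRing (S ⧸ Ideal.span {x})] (n : ℕ)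
    (h : HasProjectiveDimensionLT
      (ModuleCat.of (S ⧸ Ideal.span {x}) ((S ⧸ Ideal.span {x}) ⊗[S] (maximalIdeal S))) n) :
    HasProjectiveDimensionLT
      (ModuleCat.of (S ⧸ Ideal.span {x}) (ResidueField (S ⧸ Ideal.span {x}))) n := by
  let S' := S ⧸ Ideal.span {x}
  have hloc : IsLocalHom (Ideal.Quotient.mk (Ideal.span {x})) :=
    Function.Surjective.isLocalHom _ Ideal.Quotient.mk_surjective
  -- map in
  have hi : maximalIdeal S' ≤ LinearMap.ker (LinearMap.toSpanSingleton S' (S' ⊗[S] (maximalIdeal S))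
      (1 ⊗ₜ (⟨x, hxm⟩ : maximalIdeal S))) := by
    intro y hy
    obtain ⟨y, rfl⟩ := Ideal.Quotient.mk_surjective y
    have hy' : y ∈ maximalIdeal S := by
      rw [mem_maximalIdeal, mem_nonunits_iff] at hy ⊢
      exact fun hu => hy (hu.map _)
    rw [LinearMap.mem_ker, LinearMap.toSpanSingleton_apply, TensorProduct.smul_tmul', smul_eq_mul,
      mul_one]
    have e1 : (Ideal.Quotient.mk (Ideal.span {x}) y) = y • (1 : S') := by
      rw [Algebra.smul_def, mul_one]; rfl
    rw [e1, TensorProduct.smul_tmul]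
    have e2 : y • (⟨x, hxm⟩ : maximalIdeal S) = x • ⟨y, hy'⟩ := Subtype.ext (mul_comm _ _)
    rw [e2, ← TensorProduct.smul_tmul]
    have e3 : x • (1 : S') = 0 := by
      rw [Algebra.smul_def, mul_one]
      exact Ideal.Quotient.eq_zero_iff_mem.mpr (Ideal.mem_span_singleton_self x)
    rw [e3, TensorProduct.zero_tmul]
  obtain ⟨i, hi1⟩ : ∃ i : ResidueField S' →ₗ[S'] S' ⊗[S] (maximalIdeal S),
      i 1 = 1 ⊗ₜ (⟨x, hxm⟩ : maximalIdeal S) :=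
    lift_residue _ (fun y hy => by simpa using hi hy)
  have hx0 : (maximalIdeal S).toCotangent ⟨x, hxm⟩ ≠ 0 := by
    rw [Ne, Ideal.toCotangent_eq_zero]; exact hx2
  obtain ⟨f, hf⟩ := Module.Projective.exists_dual_eq_one (ResidueField S) (V := CotangentSpace S) hx0
  have hr : maximalIdeal S ≤ LinearMap.ker (Algebra.linearMap S (ResidueField S')) := by
    intro y hy
    rw [LinearMap.mem_ker, Algebra.linearMap_apply,
      IsScalarTower.algebraMap_apply S S' (ResidueField S'), ResidueField.algebraMap_eq,
      residue_eq_zero_iff, mem_maximalIdeal, mem_nonunits_iff]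
    intro hu
    exact hy (hloc.map_nonunit _ hu)
  obtain ⟨c, hc⟩ : ∃ c : ResidueField S →ₗ[S] ResidueField S', c 1 = 1 :=
    lift_residue (1 : ResidueField S') (fun y hy => by
      rw [Algebra.smul_def, mul_one]; exact hr hy)
  obtain ⟨φ, hφ⟩ : ∃ φ : maximalIdeal S →ₗ[S] ResidueField S', φ ⟨x, hxm⟩ = 1 := by
    refine ⟨c ∘ₗ (f.restrictScalars S) ∘ₗ (maximalIdeal S).toCotangent, ?_⟩
    change c (f ((maximalIdeal S).toCotangent ⟨x, hxm⟩)) = 1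
    rw [hf, hc]
  obtain ⟨r, hr1⟩ : ∃ r : S' ⊗[S] (maximalIdeal S) →ₗ[S'] ResidueField S',
      r (1 ⊗ₜ (⟨x, hxm⟩ : maximalIdeal S)) = 1 :=
    ⟨LinearMap.liftBaseChange S' φ, by rw [LinearMap.liftBaseChange_tmul, one_smul, hφ]⟩
  have hri : r ∘ₗ i = LinearMap.id := by
    apply LinearMap.ext
    intro y
    obtain ⟨y, rfl⟩ := residue_surjective y
    have e : residue S' y = y • (1 : ResidueField S') := by
      rw [Algebra.smul_def, mul_one]; rfl
    rw [e, map_smul, LinearMap.comp_apply, hi1, hr1]; rfl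
  have hret : Retract (ModuleCat.of S' (ResidueField S'))
      (ModuleCat.of S' (S' ⊗[S] (maximalIdeal S))) :=
    ⟨ModuleCat.ofHom i, ModuleCat.ofHom r, by
      rw [← ModuleCat.ofHom_comp]
      exact congrArg ModuleCat.ofHom hri⟩
  exact hret.hasProjectiveDimensionLT n


lemma regular_lift {S : Type} [CommRing S] [IsNoetherianRing S] [IsLocalRing S] (x : S)
    (hxm : x ∈ maximalIdeal S) (hx : x ∈ nonZeroDivisors S)
    [IsLocalRing (S ⧸ Ideal.span {x})] (h : IsRegularLocal (S ⧸ Ideal.span {x})) :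
    IsRegularLocal S := by
  classical
  obtain ⟨_, s, hs, hcard⟩ := h
  have hdim := ringKrullDim_quotient_span_singleton_succ_eq_ringKrullDim_of_mem_nonZeroDivisors hx hxm
  let π := Ideal.Quotient.mk (Ideal.span {x})
  have hloc : IsLocalHom π := Function.Surjective.isLocalHom _ Ideal.Quotient.mk_surjective
  obtain ⟨σ, hσ⟩ := (Ideal.Quotient.mk_surjective (I := Ideal.span {x})).hasRightInverse
  let t := insert x (s.image σ)
  have hspan : Ideal.span (t : Set S) = maximalIdeal S := by
    have h1 : Ideal.span ((s.image σ : Finset S) : Set S) ⊔ Ideal.span {x} =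
        (maximalIdeal (S ⧸ Ideal.span {x})).comap π := by
      rw [← hs]
      have h2 : Ideal.span (s : Set (S ⧸ Ideal.span {x})) =
          (Ideal.span ((s.image σ : Finset S) : Set S)).map π := by
        rw [Ideal.map_span]
        congr 1
        rw [Finset.coe_image, Set.image_image]
        simp only [π, hσ _, Set.image_id']
      rw [h2, Ideal.comap_map_of_surjective' _ Ideal.Quotient.mk_surjective, Ideal.mk_ker]
    have h3 : (maximalIdeal (S ⧸ Ideal.span {x})).comap π = maximalIdeal S :=
      (((local_hom_TFAE π).out 0 4).mp hloc)
    rw [← h3, ← h1, Finset.coe_insert, Ideal.span_insert, sup_comm]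
  refine ⟨inferInstance, t, hspan, le_antisymm ?_ ?_⟩
  · rw [← hdim, ← hcard]
    have : t.card ≤ s.card + 1 :=
      (Finset.card_insert_le _ _).trans (by gcongr; exact Finset.card_image_le)
    exact_mod_cast this
  · refine (ringKrullDim_le_spanFinrank_maximalIdeal S).trans ?_
    rw [← hspan]
    have := Submodule.spanFinrank_span_le_ncard_of_finite (R := S) t.finite_toSet
    rw [Set.ncard_coe_finset] at this
    exact_mod_cast this

lemma serre : ∀ (d : ℕ) (S : Type) [CommRing S] [IsNoetherianRing S] [IsLocalRing S]
    (_ : ringKrullDim S = d) (n : ℕ)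
    (_ : HasProjectiveDimensionLT (ModuleCat.of S (ResidueField S)) (n + 1)),
    IsRegularLocal S := by
  intro d
  induction d using Nat.strong_induction_on with
  | _ d ih =>
  intro S _ _ _ hd n hpd
  by_cases h0 : ∃ s : S, s ≠ 0 ∧ ∀ x ∈ maximalIdeal S, s * x = 0
  · obtain ⟨s, hs, hsm⟩ := h0
    exact regular_of_depth_zero s hs hsm n hpd
  obtain ⟨x, hxm, hx2, hx⟩ := exists_nzd h0
  have : Nontrivial (S ⧸ Ideal.span {x}) := by
    rw [Ideal.Quotient.nontrivial_iff]
    intro h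
    exact (IsLocalRing.maximalIdeal.isMaximal S).ne_top
      (top_le_iff.mp (h ▸ (Ideal.span_singleton_le_iff_mem _).mpr hxm))
  have hl : IsLocalRing (S ⧸ Ideal.span {x}) :=
    IsLocalRing.of_surjective' (Ideal.Quotient.mk (Ideal.span {x})) Ideal.Quotient.mk_surjective
  have hdim := ringKrullDim_quotient_span_singleton_succ_eq_ringKrullDim_of_mem_nonZeroDivisors hx hxm
  obtain ⟨d', hd'⟩ : ∃ d' : ℕ, ringKrullDim (S ⧸ Ideal.span {x}) = d' := by
    have h1 := ringKrullDim_ne_top (R := S ⧸ Ideal.span {x})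
    have h2 := ringKrullDim_ne_bot (R := S ⧸ Ideal.span {x})
    generalize ringKrullDim (S ⧸ Ideal.span {x}) = w at h1 h2
    lift w to ℕ∞ using h2
    lift w to ℕ using (by exact_mod_cast h1)
    exact ⟨w, rfl⟩
  have hlt : d' < d := by
    rw [hd', hd] at hdim
    have : d' + 1 = d := by exact_mod_cast hdim
    omega
  refine regular_lift x hxm hx (ih d' hlt _ hd' n ?_)
  apply pd_resfield_quot x hxm hx2
  apply pd_quot x hx
  · intro a ha
    apply Subtype.ext
    exact (mem_nonZeroDivisors_iff.mp hx).1 _ (congrArg Subtype.val ha)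
  · have h2 : HasProjectiveDimensionLT (ModuleCat.of S (S ⧸ maximalIdeal S)) (n + 2) :=
      haveI : HasProjectiveDimensionLT (ModuleCat.of S (S ⧸ maximalIdeal S)) (n + 1) := hpd
      hasProjectiveDimensionLT_of_ge _ (n + 1) (n + 2) (by omega)
    exact pd_ker (Submodule.subtype (maximalIdeal S)) (Submodule.mkQ (maximalIdeal S))
      (Submodule.injective_subtype _) (Submodule.mkQ_surjective _)
      (LinearMap.exact_subtype_mkQ _) inferInstance n h2



/-- Let `R` be a Cohen-Macaulay noetherian local ring. Then the singular
locus of `R` is contained in `V(⋂_{i>0, K,L ∈ CM₀(R)} Ann_R Ext^i(K,L))`. -/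
theorem stmt8 (R : Type) [CommRing R] [IsNoetherianRing R] [IsLocalRing R]
    (hCM : IsCMLocalRing R) :
    singularLocus R ⊆ PrimeSpectrum.zeroLocus
      ((⨅ (i : ℕ) (_ : 0 < i) (K : ModuleCat.{0} R) (_ : MemCM0 R K)
          (L : ModuleCat.{0} R) (_ : MemCM0 R L),
          Module.annihilator R (ExtMod R i K L) : Ideal R) : Set R) := by
  intro p hp a ha
  by_contra hap
  apply hp
  have hap' : a ∉ p.asIdeal := hap
  have hdim : ∀ (S : Type) [CommRing S] [IsNoetherianRing S] [IsLocalRing S],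
      ∃ d : ℕ, ringKrullDim S = d := by
    intro S _ _ _
    have h1 := ringKrullDim_ne_top (R := S)
    have h2 := ringKrullDim_ne_bot (R := S)
    generalize ringKrullDim S = w at h1 h2
    lift w to ℕ∞ using h2
    lift w to ℕ using (by exact_mod_cast h1)
    exact ⟨w, rfl⟩
  obtain ⟨d, hd⟩ := hdim R
  have hdep : (d : ℕ∞) ≤ moduleDepth R R := by
    have h1 : (moduleDepth R R : WithBot ℕ∞) = ringKrullDim R := hCM
    rw [hd] at h1
    have h2 : moduleDepth R R = (d : ℕ∞) := by exact_mod_cast h1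
    exact h2.ge
  rw [le_moduleDepth_iff] at hdep
  have hpd := pd_residue d hd hdep a (by
    intro K L hK hL
    rw [← extMod_succ_kill_iff]
    intro x
    have ha' := ha
    simp only [SetLike.mem_coe, Submodule.mem_iInf] at ha'
    exact Module.mem_annihilator.mp (ha' 1 one_pos K hK L hL) x) p.asIdeal hap'
  obtain ⟨d', hd'⟩ := hdim (Localization.AtPrime p.asIdeal)
  exact serre d' _ hd' d hpd

end
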